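/- arXiv:0802.2045 — 2 statements merged into one kernel-verified Lean document; each statement's English description precedes it below -/
import Mathlib

section
/- Let q be a prime power, F a finite field with q elements, and let M ⊆ F^q be the set of vectors whose q coordinates are pairwise distinct (injective tuples Fin q → F). For any two distinct points x, y ∈ M, the affine line {y + t•(x − y) : t ∈ F} is contained in M if and only if all coordinates of x − y are equal (i.e. x − y is a nonzero scalar multiple of the all-ones vector (1, 1, …, 1)). -/
/-- Let `M ⊆ F^q` be the set of vectors with pairwise distinct coordinates
(injective tuples `Fin q → F`, where `q = |F|`). For two distinct points `x, y ∈ M`, the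
affine line `{y + t • (x - y) : t ∈ F}` is contained in `M` if and only if all the
coordinates of `x - y` are equal (i.e. `x - y` is a nonzero scalar multiple of the
all-ones vector). -/
theorem line_in_braid_complement_iff
    (q : ℕ) (hq : IsPrimePow q)
    (F : Type) [Field F] [Fintype F] (hF : Fintype.card F = q)
    (x y : Fin q → F)
    (hx : Function.Injective x) (hy : Function.Injective y) (hxy : x ≠ y) :
    {z : Fin q → F | ∃ t : F, z = y + t • (x - y)} ⊆
        {v : Fin q → F | Function.Injective v} ↔
      ∀ i j : Fin q, (x - y) i = (x - y) j := by
  constructor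
  · intro h i j
    by_contra hne
    have hd : (x - y) i - (x - y) j ≠ 0 := sub_ne_zero.mpr hne
    -- The line meets the hyperplane `v i = v j` at this parameter.
    let t : F := (y j - y i) / ((x - y) i - (x - y) j)
    have ht : t * ((x - y) i - (x - y) j) = y j - y i := div_mul_cancel₀ _ hd
    have hinj : Function.Injective (y + t • (x - y)) := h ⟨t, rfl⟩
    have hij : i = j := hinj (by
      change y i + t * (x - y) i = y j + t * (x - y) j
      linear_combination ht)
    exact hne (congrArg (x - y) hij)
  · rintro h _ ⟨t, rfl⟩ i j hij
    apply hy
    change y i + t * (x - y) i = y j + t * (x - y) j at hij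
    rw [h i j] at hij
    exact add_right_cancel hij
end

section
/- Let q be a prime power, F a finite field with q elements, and let M ⊆ F^q be the set of vectors whose q coordinates are pairwise distinct (injective tuples Fin q → F). The number of affine lines of F^q that are entirely contained in M is exactly (q−1)!. -/
/-- If every point of a line with direction `d` is an injective tuple, then all coordinates
of `d` agree. -/
lemma direction_const_of_line_injective {ι F : Type*} [Field F] {y d : ι → F}
    (h : ∀ t : F, Function.Injective (y + t • d)) (i j : ι) : d i = d j := by
  by_contra hne
  have hd : d i - d j ≠ 0 := sub_ne_zero.mpr hne
  refine hne (congrArg d (h (-(y i - y j) / (d i - d j)) ?_))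
  simp only [Pi.add_apply, Pi.smul_apply, smul_eq_mul]
  field_simp
  ring

/-- The line in direction `(1, …, 1)` through the point whose first coordinate is `0` and whose
other coordinates are given by `e`. -/
def diagonalLine {F : Type*} [Field F] {n : ℕ} (e : Fin n ↪ Fˣ) : Set (Fin (n + 1) → F) :=
  {z | ∃ t : F, z = Fin.cons 0 (fun i => (e i : F)) + t • (1 : Fin (n + 1) → F)}

lemma diagonalLine_injective {F : Type*} [Field F] {n : ℕ} :
    Function.Injective (diagonalLine : (Fin n ↪ Fˣ) → Set (Fin (n + 1) → F)) := by
  intro e e' h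
  have hmem : (Fin.cons 0 (fun i => (e i : F)) : Fin (n + 1) → F) ∈ diagonalLine e' :=
    h ▸ ⟨0, by simp⟩
  obtain ⟨t, ht⟩ := hmem
  have ht0 : t = 0 := by simpa using (congrFun ht 0).symm
  ext i
  simpa [ht0] using congrFun ht i.succ

lemma injective_of_mem_diagonalLine {F : Type*} [Field F] {n : ℕ} {e : Fin n ↪ Fˣ}
    {z : Fin (n + 1) → F} (hz : z ∈ diagonalLine e) : Function.Injective z := by
  obtain ⟨t, rfl⟩ := hz
  have hcons : Function.Injective (Fin.cons 0 (fun i => (e i : F)) : Fin (n + 1) → F) :=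
    Fin.cons_injective_iff.mpr ⟨by simp, Units.val_injective.comp e.injective⟩
  intro i j hij
  exact hcons (by simpa using hij)

lemma exists_diagonalLine_eq {F : Type*} [Field F] {n : ℕ} {y d : Fin (n + 1) → F} (hd : d ≠ 0)
    (h : ∀ t : F, Function.Injective (y + t • d)) :
    ∃ e : Fin n ↪ Fˣ, diagonalLine e = {z | ∃ t : F, z = y + t • d} := by
  have hconst (i) : d i = d 0 := direction_const_of_line_injective h i 0
  have hd0 : d 0 ≠ 0 := fun h0 => hd (funext fun i => (hconst i).trans h0)
  have hy : Function.Injective y := by simpa using h 0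
  obtain ⟨e, he⟩ : ∃ e : Fin n ↪ Fˣ, ∀ i, (e i : F) = y i.succ - y 0 := by
    refine ⟨⟨fun i => Units.mk0 (y i.succ - y 0)
      (sub_ne_zero.mpr (hy.ne i.succ_ne_zero)), fun i j hij => ?_⟩, fun i => rfl⟩
    simpa [hy.eq_iff] using congrArg Units.val hij
  have hcons : (Fin.cons 0 (fun i => (e i : F)) : Fin (n + 1) → F) = fun i => y i - y 0 := by
    ext i
    cases i using Fin.cases <;> simp [he]
  refine ⟨e, ?_⟩
  ext z
  simp only [diagonalLine, hcons, Set.mem_ofPred_eq]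
  constructor
  · rintro ⟨t, rfl⟩
    refine ⟨(t - y 0) / d 0, funext fun i => ?_⟩
    simp only [Pi.add_apply, Pi.smul_apply, smul_eq_mul, Pi.one_apply, hconst i]
    field_simp
    ring
  · rintro ⟨t, rfl⟩
    refine ⟨y 0 + t * d 0, funext fun i => ?_⟩
    simp only [Pi.add_apply, Pi.smul_apply, smul_eq_mul, Pi.one_apply, hconst i]
    ring

/-- Let `M ⊆ F^q` be the set of vectors with pairwise distinct coordinates
(injective tuples `Fin q → F`, where `q = |F|`). The number of affine lines of `F^q`
entirely contained in `M` is exactly `(q-1)!`. -/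
theorem card_lines_in_braid_complement
    (q : ℕ) (hq : IsPrimePow q)
    (F : Type) [Field F] [Fintype F] (hF : Fintype.card F = q) :
    Set.ncard {l : Set (Fin q → F) |
        (∃ (y d : Fin q → F), d ≠ 0 ∧ l = {z : Fin q → F | ∃ t : F, z = y + t • d}) ∧
          l ⊆ {v : Fin q → F | Function.Injective v}} = (q - 1).factorial := by
  classical
  obtain ⟨n, rfl⟩ : ∃ n, q = n + 1 := Nat.exists_eq_succ_of_ne_zero hq.ne_zero
  have hrange : {l : Set (Fin (n + 1) → F) |
      (∃ (y d : Fin (n + 1) → F), d ≠ 0 ∧ l = {z | ∃ t : F, z = y + t • d}) ∧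
        l ⊆ {v | Function.Injective v}} = Set.range (diagonalLine (F := F) (n := n)) := by
    ext l
    constructor
    · rintro ⟨⟨y, d, hd, rfl⟩, hl⟩
      exact exists_diagonalLine_eq hd fun t => hl ⟨t, rfl⟩
    · rintro ⟨e, rfl⟩
      exact ⟨⟨_, 1, one_ne_zero, rfl⟩, fun z hz => injective_of_mem_diagonalLine hz⟩
  rw [hrange, ← Set.image_univ, Set.ncard_image_of_injective _ diagonalLine_injective,
    Set.ncard_univ, Nat.card_eq_fintype_card, Fintype.card_embedding_eq, Fintype.card_units, hF,
    Fintype.card_fin, Nat.add_sub_cancel, Nat.descFactorial_self]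
end
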